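/- Let n > m ≥ 1, let A, A_ε ∈ ℂ^{n×n} with A invertible and A_ε invertible, and let U ∈ ℂ^{n×m} have full column rank and be such that U*AU is invertible. Define B = A_ε⁻¹(I − A U (U*AU)⁻¹ U*) + U (U*AU)⁻¹ U*. Then 1 is an eigenvalue of A B whose eigenspace has dimension at least m, i.e. dim ker(A B − I) ≥ m. -/

import Mathlib

open Matrix
open scoped ComplexOrder

/-- For the projection-based preconditioner
`B = A_ε⁻¹(I − A U (U*AU)⁻¹ U*) + U (U*AU)⁻¹ U*`, the eigenvalue `1` of `A B` has an
eigenspace of dimension at least `m`: `dim ker(A B − I) ≥ m`. -/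
theorem stmt_5 (n m : ℕ) (hm : 1 ≤ m) (hnm : m < n)
    (A Aeps : Matrix (Fin n) (Fin n) ℂ) (hA : IsUnit A) (hAeps : IsUnit Aeps)
    (U : Matrix (Fin n) (Fin m) ℂ) (hU : Function.Injective U.mulVec)
    (hUAU : IsUnit (Uᴴ * A * U)) :
    let B : Matrix (Fin n) (Fin n) ℂ :=
      Aeps⁻¹ * (1 - A * U * (Uᴴ * A * U)⁻¹ * Uᴴ) + U * (Uᴴ * A * U)⁻¹ * Uᴴ
    m ≤ Module.finrank ℂ (LinearMap.ker (A * B - 1).mulVecLin) := by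
  intro B
  have hE : (Uᴴ * A * U)⁻¹ * (Uᴴ * (A * U)) = 1 := by
    rw [← Matrix.mul_assoc Uᴴ A U]
    exact Matrix.nonsing_inv_mul _ ((Matrix.isUnit_iff_isUnit_det _).1 hUAU)
  have hB : B * (A * U) = U := by
    have h1 : (1 - A * U * (Uᴴ * A * U)⁻¹ * Uᴴ) * (A * U) = 0 := by
      rw [Matrix.sub_mul, Matrix.one_mul, Matrix.mul_assoc (A * U * _), Matrix.mul_assoc (A * U),
        hE, Matrix.mul_one, sub_self]
    have h2 : U * (Uᴴ * A * U)⁻¹ * Uᴴ * (A * U) = U := by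
      rw [Matrix.mul_assoc (U * _), Matrix.mul_assoc U, hE, Matrix.mul_one]
    simp only [B]
    rw [Matrix.add_mul, h2, Matrix.mul_assoc Aeps⁻¹, h1, Matrix.mul_zero, zero_add]
  have hK : (A * B - 1) * (A * U) = 0 := by
    rw [Matrix.sub_mul, Matrix.mul_assoc, hB, Matrix.one_mul, sub_self]
  have hinj : Function.Injective (A * U).mulVecLin := by
    intro x y hxy
    apply hU
    apply Matrix.mulVec_injective_of_isUnit hA
    simpa [Matrix.mulVec_mulVec] using hxy
  have hle : LinearMap.range (A * U).mulVecLin ≤ LinearMap.ker (A * B - 1).mulVecLin := by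
    rintro _ ⟨x, rfl⟩
    rw [LinearMap.mem_ker, Matrix.mulVecLin_apply, Matrix.mulVecLin_apply, Matrix.mulVec_mulVec,
      hK, Matrix.zero_mulVec]
  have h := Submodule.finrank_mono hle
  rw [LinearMap.finrank_range_of_inj hinj] at h
  simpa using h
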